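/- arXiv:2004.05088 — 2 statements merged into one kernel-verified Lean document; each statement's English description precedes it below -/
import Mathlib

section
/- The limit of P_W(w) as w → ∞ equals 1; equivalently, P_W is the cumulative distribution function of a probability distribution on [0, ∞) having an atom of mass 1 − λD at 0. -/
open Real MeasureTheory Filter

/-- Stationary waiting-time CDF of the M/D/1 queue (Erlang's formula),
extended by `0` on the negative reals. -/
noncomputable def PW (lam D w : ℝ) : ℝ :=
  if w < 0 then 0 else
    (1 - lam * D) * ∑ k ∈ Finset.range (⌊w / D⌋₊ + 1),
      (-(lam * (w - (k : ℝ) * D))) ^ k * Real.exp (lam * (w - (k : ℝ) * D)) /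
        (Nat.factorial k)

/-- Continuous part of the stationary waiting-time density of the M/D/1 queue. -/
noncomputable def fW (lam D w : ℝ) : ℝ :=
  (1 - lam * D) * (lam * Real.exp (lam * w) +
    ∑ k ∈ Finset.Icc 1 ⌊w / D⌋₊,
      (-lam) ^ k * (w - (k : ℝ) * D) ^ (k - 1) * Real.exp (lam * (w - (k : ℝ) * D)) *
        ((k : ℝ) + lam * (w - (k : ℝ) * D)) / (Nat.factorial k))

/-- The Erlang sum on the `n`-th service period, as a smooth function of the time `x` elapsed
since the start `n * D` of that period. -/
noncomputable def erlangPiece (lam D : ℝ) (n : ℕ) (x : ℝ) : ℝ :=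
  ∑ k ∈ Finset.range (n + 1),
    (-(lam * (x + n * D - k * D))) ^ k * Real.exp (lam * (x + n * D - k * D)) / k.factorial

lemma erlangPiece_zero (lam D x : ℝ) : erlangPiece lam D 0 x = Real.exp (lam * x) := by
  simp [erlangPiece]

lemma erlangPiece_succ_zero (lam D : ℝ) (n : ℕ) :
    erlangPiece lam D (n + 1) 0 = erlangPiece lam D n D := by
  rw [erlangPiece, Finset.sum_range_succ, erlangPiece]
  have h : (0 : ℝ) + ((n + 1 : ℕ) : ℝ) * D - ((n + 1 : ℕ) : ℝ) * D = 0 := by ring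
  rw [h]
  simp only [mul_zero, neg_zero, ne_eq, Nat.succ_ne_zero, not_false_eq_true, zero_pow, zero_mul,
    zero_div, add_zero]
  refine Finset.sum_congr rfl fun k _ => ?_
  have h' : (0 : ℝ) + ((n + 1 : ℕ) : ℝ) * D - k * D = D + n * D - k * D := by
    push_cast; ring
  rw [h']

lemma hasDerivAt_erlangPiece_succ (lam D : ℝ) (n : ℕ) (x : ℝ) :
    HasDerivAt (erlangPiece lam D (n + 1))
      (lam * (erlangPiece lam D (n + 1) x - erlangPiece lam D n x)) x := by
  have harg (a : ℝ) : HasDerivAt (fun y : ℝ => lam * (y + a)) lam x := by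
    simpa using ((hasDerivAt_id x).add_const a).const_mul lam
  have hzero : HasDerivAt (fun y : ℝ => Real.exp (lam * (y + (n + 1 : ℕ) * D)))
      (lam * Real.exp (lam * (x + (n + 1 : ℕ) * D))) x := by
    simpa [mul_comm] using (harg ((n + 1 : ℕ) * D)).exp
  have hsucc (k : ℕ) : HasDerivAt
      (fun y : ℝ => (-(lam * (y + (n * D - k * D)))) ^ (k + 1) *
        Real.exp (lam * (y + (n * D - k * D))) / (k + 1).factorial)
      (lam * ((-(lam * (x + (n * D - k * D)))) ^ (k + 1) *
        Real.exp (lam * (x + (n * D - k * D))) / (k + 1).factorial -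
        (-(lam * (x + (n * D - k * D)))) ^ k *
        Real.exp (lam * (x + (n * D - k * D))) / k.factorial)) x := by
    have h := harg (n * D - k * D)
    refine (((h.fun_neg.fun_pow (k + 1)).fun_mul h.exp).div_const
      ((k + 1).factorial : ℝ)).congr_deriv ?_
    have hk : (k.factorial : ℝ) ≠ 0 := by positivity
    have hk' : (k : ℝ) + 1 ≠ 0 := by positivity
    simp only [Nat.factorial_succ, Nat.add_sub_cancel]
    push_cast
    field_simp
    ring
  have hsplit (y : ℝ) : erlangPiece lam D (n + 1) y =
      ∑ k ∈ Finset.range (n + 1), ((-(lam * (y + (n * D - k * D)))) ^ (k + 1) *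
        Real.exp (lam * (y + (n * D - k * D))) / (k + 1).factorial) +
      Real.exp (lam * (y + (n + 1 : ℕ) * D)) := by
    rw [erlangPiece, Finset.sum_range_succ']
    congr 1
    · refine Finset.sum_congr rfl fun k _ => ?_
      have h : y + ((n + 1 : ℕ) : ℝ) * D - ((k + 1 : ℕ) : ℝ) * D = y + (n * D - k * D) := by
        push_cast; ring
      rw [h]
    · simp
  have hsum := (HasDerivAt.fun_sum (u := Finset.range (n + 1)) fun k _ => hsucc k).add hzero
  refine (hsum.congr_of_eventuallyEq (Eventually.of_forall hsplit)).congr_deriv ?_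
  rw [← Finset.mul_sum, Finset.sum_sub_distrib, hsplit, erlangPiece]
  simp only [add_sub_assoc]
  ring

lemma continuous_erlangPiece (lam D : ℝ) (n : ℕ) : Continuous (erlangPiece lam D n) := by
  unfold erlangPiece
  fun_prop

/-- A sequence of functions on `[0, D]` glued end to end, each solving the delay equation
`h' = lam * (h - h_prev)`, satisfies the integrated delay equation as soon as the first one does
at its right endpoint. -/
lemma integrated_delay_equation {lam D : ℝ} {h : ℕ → ℝ → ℝ} (hc : ∀ n, Continuous (h n))
    (hd : ∀ n x, HasDerivAt (h (n + 1)) (lam * (h (n + 1) x - h n x)) x)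
    (hglue : ∀ n, h (n + 1) 0 = h n D) (hbase : h 0 D = lam * ∫ t in 0..D, h 0 t)
    (n : ℕ) (x : ℝ) :
    h (n + 1) x = lam * ((∫ t in 0..x, h (n + 1) t) + ∫ t in x..D, h n t) := by
  have hii (m : ℕ) (a b : ℝ) : IntervalIntegrable (h m) volume a b :=
    (hc m).intervalIntegrable a b
  have hftc (m : ℕ) (y : ℝ) : h (m + 1) y =
      h m D + lam * ((∫ t in 0..y, h (m + 1) t) - ∫ t in 0..y, h m t) := by
    have := intervalIntegral.integral_eq_sub_of_hasDerivAt (a := 0) (b := y)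
      (fun t _ => hd m t) (((hii _ _ _).sub (hii _ _ _)).const_mul lam)
    rw [intervalIntegral.integral_const_mul,
      intervalIntegral.integral_sub (hii _ _ _) (hii _ _ _), hglue] at this
    linarith
  have hend (m : ℕ) : h m D = lam * ∫ t in 0..D, h m t := by
    induction m with
    | zero => exact hbase
    | succ m ih => rw [hftc, ih]; ring
  rw [hftc, hend, ← intervalIntegral.integral_add_adjacent_intervals (hii n 0 x) (hii n x D)]
  ring

/-- The integrated delay equation is a contraction with factor `lam * D`. -/
lemma abs_le_of_integrated_delay_equation {lam D B : ℝ} {f g : ℝ → ℝ} (hlam : 0 < lam)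
    (hD : 0 < D) (hstab : lam * D < 1) (hg : Continuous g)
    (hfg : ∀ x, g x = lam * ((∫ t in 0..x, g t) + ∫ t in x..D, f t))
    (hf : ∀ x ∈ Set.Icc 0 D, |f x| ≤ B) {x : ℝ} (hx : x ∈ Set.Icc 0 D) :
    |g x| ≤ lam * D * B := by
  obtain ⟨z, hz, hmax⟩ := isCompact_Icc.exists_isMaxOn (Set.nonempty_Icc.2 hD.le)
    (hg.abs.continuousOn (s := Set.Icc 0 D))
  have hleft : |∫ t in 0..z, g t| ≤ |g z| * z := by
    have := intervalIntegral.norm_integral_le_of_norm_le_const (a := 0) (b := z) (f := g)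
      (C := |g z|) fun t ht => by
        rw [Set.uIoc_of_le hz.1] at ht
        exact hmax ⟨ht.1.le, ht.2.trans hz.2⟩
    simpa [abs_of_nonneg hz.1] using this
  have hright : |∫ t in z..D, f t| ≤ B * (D - z) := by
    have := intervalIntegral.norm_integral_le_of_norm_le_const (a := z) (b := D) (f := f)
      (C := B) fun t ht => by
        rw [Set.uIoc_of_le hz.2] at ht
        exact hf t ⟨hz.1.trans ht.1.le, ht.2⟩
    simpa [abs_of_nonneg (sub_nonneg.2 hz.2)] using this
  have hz_le : |g z| ≤ lam * (|g z| * z + B * (D - z)) := by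
    conv_lhs => rw [hfg z, abs_mul, abs_of_pos hlam]
    gcongr
    exact (abs_add_le _ _).trans (add_le_add hleft hright)
  have hB : 0 ≤ B := (abs_nonneg _).trans (hf z hz)
  have hlz : lam * z < 1 := (mul_le_mul_of_nonneg_left hz.2 hlam.le).trans_lt hstab
  have hlz0 : 0 ≤ lam * z := mul_nonneg hlam.le hz.1
  refine (hmax hx).trans (le_of_mul_le_mul_left ?_ (sub_pos.2 hlz))
  have : 0 ≤ B * (lam * z) * (1 - lam * D) :=
    mul_nonneg (mul_nonneg hB hlz0) (sub_nonneg.2 hstab.le)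
  change (1 - lam * z) * |g z| ≤ _
  nlinarith

lemma exists_abs_erlangPiece_sub_le {lam D : ℝ} (hlam : 0 < lam) (hD : 0 < D)
    (hstab : lam * D < 1) :
    ∃ B, ∀ n, ∀ x ∈ Set.Icc 0 D,
      |erlangPiece lam D n x - (1 - lam * D)⁻¹| ≤ (lam * D) ^ n * B := by
  set c := (1 - lam * D)⁻¹
  have hc : (1 - lam * D) * c = 1 := mul_inv_cancel₀ (sub_pos.2 hstab).ne'
  let h : ℕ → ℝ → ℝ := fun n x => erlangPiece lam D n x - c
  have hcont (n : ℕ) : Continuous (h n) := (continuous_erlangPiece lam D n).sub continuous_const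
  have hbase : h 0 D = lam * ∫ t in 0..D, h 0 t := by
    have hexp : ∫ t in 0..D, lam * Real.exp (lam * t) = Real.exp (lam * D) - 1 := by
      have hd (t : ℝ) : HasDerivAt (fun s => Real.exp (lam * s)) (lam * Real.exp (lam * t)) t := by
        simpa [mul_comm] using ((hasDerivAt_id t).const_mul lam).exp
      rw [intervalIntegral.integral_eq_sub_of_hasDerivAt (fun t _ => hd t)
        (Continuous.intervalIntegrable (by fun_prop) _ _)]
      simp
    rw [intervalIntegral.integral_const_mul] at hexp
    simp only [h, erlangPiece_zero]
    rw [intervalIntegral.integral_sub (Continuous.intervalIntegrable (by fun_prop) _ _)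
      (Continuous.intervalIntegrable (by fun_prop) _ _), mul_sub, hexp,
      intervalIntegral.integral_const, smul_eq_mul]
    linarith
  have hdelay := integrated_delay_equation hcont
    (fun n x => by simpa [h] using (hasDerivAt_erlangPiece_succ lam D n x).sub_const c)
    (fun n => by simp [h, erlangPiece_succ_zero]) hbase
  obtain ⟨B, hB⟩ := isCompact_Icc.exists_bound_of_continuousOn
    ((hcont 0).continuousOn (s := Set.Icc 0 D))
  refine ⟨B, fun n => ?_⟩
  induction n with
  | zero => simpa using hB
  | succ n ih =>
    intro x hx
    rw [pow_succ', mul_assoc]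
    exact abs_le_of_integrated_delay_equation hlam hD hstab (hcont (n + 1)) (hdelay n) ih hx

lemma PW_eq_erlangPiece {lam D w : ℝ} (hw : 0 ≤ w) :
    PW lam D w = (1 - lam * D) * erlangPiece lam D ⌊w / D⌋₊ (w - ⌊w / D⌋₊ * D) := by
  simp [PW, erlangPiece, hw.not_gt]

/-- the limit of `P_W w` as `w → ∞` equals `1` (so `P_W` is the CDF of a
probability distribution on `[0, ∞)`), and the atom at `0` has mass `1 - λ D`
(the CDF jumps from `0` to `1 - λ D` at `w = 0`). -/
theorem md1_cdf_tendsto_one (lam D : ℝ) (hlam : 0 < lam) (hD : 0 < D)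
    (hstab : lam * D < 1) :
    Filter.Tendsto (PW lam D) Filter.atTop (nhds 1) ∧ PW lam D 0 = 1 - lam * D := by
  refine ⟨?_, by simp [PW]⟩
  obtain ⟨B, hB⟩ := exists_abs_erlangPiece_sub_le hlam hD hstab
  have hpos : 0 < 1 - lam * D := sub_pos.2 hstab
  have hfloor : Tendsto (fun w : ℝ => ⌊w / D⌋₊) atTop atTop :=
    tendsto_nat_floor_atTop.comp (tendsto_id.atTop_div_const hD)
  have hbound : Tendsto (fun w : ℝ => (1 - lam * D) * ((lam * D) ^ ⌊w / D⌋₊ * B)) atTop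
      (nhds 0) := by
    simpa using (((tendsto_pow_atTop_nhds_zero_of_lt_one (mul_pos hlam hD).le hstab).comp
      hfloor).mul_const B).const_mul (1 - lam * D)
  rw [tendsto_iff_norm_sub_tendsto_zero]
  refine squeeze_zero' (Eventually.of_forall fun _ => norm_nonneg _) ?_ hbound
  filter_upwards [eventually_ge_atTop 0] with w hw
  have hle := (le_div_iff₀ hD).1 (Nat.floor_le (div_nonneg hw hD.le))
  have hlt := (div_lt_iff₀ hD).1 (Nat.lt_floor_add_one (w / D))
  have hB' := hB ⌊w / D⌋₊ (w - ⌊w / D⌋₊ * D) ⟨by linarith, by linarith⟩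
  have hfactor : PW lam D w - 1 = (1 - lam * D) *
      (erlangPiece lam D ⌊w / D⌋₊ (w - ⌊w / D⌋₊ * D) - (1 - lam * D)⁻¹) := by
    rw [PW_eq_erlangPiece hw, mul_sub, mul_inv_cancel₀ hpos.ne']
  rw [hfactor, Real.norm_eq_abs, abs_mul, abs_of_pos hpos]
  gcongr
end

section
/- Let 0 < λ < μ₁ with λD < 1 and set α₁ = μ₁ − λ. Then the probability p(A) that a packet is queued at both systems of the M/M/1–M/D/1 tandem satisfies (λ/μ₁) · [ (1 − λD)(1 − e^{−μ₁D}) + ∫₀^∞ (1 − e^{−μ₁(w+D)}) f_W(w) dw ] = (λ/μ₁) · ( 1 − (1 − λD) e^{−μ₁D} ( 1 + λ(e^{μ₁D} − 1)/(α₁ e^{μ₁D} + λ) ) ). -/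
open Real MeasureTheory Filter

section Renewal

open scoped Convolution

/-- An integrable-on-left-half-lines solution `φ` of the renewal equation `φ = g + k ⋆ φ`, where `k`
is a nonnegative kernel of total mass less than `1` supported on `[0, ∞)`, is integrable. -/
theorem integrable_of_renewal {φ g k : ℝ → ℝ} (hg : Integrable g) (hk : Integrable k)
    (hg0 : ∀ w, 0 ≤ g w) (hk0 : ∀ t, 0 ≤ k t) (hkneg : ∀ t < 0, k t = 0)
    (hk1 : ∫ t, k t < 1) (hφ : ∀ T, IntegrableOn φ (Set.Iic T))
    (heq : ∀ w, φ w = g w + ∫ t, k t * φ (w - t)) : Integrable φ := by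
  refine (aecover_Iic (μ := volume) (l := atTop) (b := fun T : ℝ => T)
    tendsto_id).integrable_of_integral_norm_bounded ((∫ w, g w) / (1 - ∫ t, k t)) hφ
    (Eventually.of_forall fun T => ?_)
  set ψ : ℝ → ℝ := (Set.Iic T).indicator fun w => ‖φ w‖ with hψ
  have hψi : Integrable ψ :=
    IntegrableOn.integrable_indicator (hφ T).norm measurableSet_Iic
  have hψ0 : ∀ w, 0 ≤ ψ w := fun w => Set.indicator_nonneg (fun _ _ => norm_nonneg _) w
  have hconv := hk.integrable_convolution (ContinuousLinearMap.mul ℝ ℝ) hψi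
  have hle : ∀ w, ψ w ≤ g w + (k ⋆[ContinuousLinearMap.mul ℝ ℝ, volume] ψ) w := by
    intro w
    simp only [convolution_def, ContinuousLinearMap.mul_apply']
    by_cases hw : w ≤ T
    · have h1 : ψ w = ‖φ w‖ := Set.indicator_of_mem (Set.mem_Iic.2 hw) _
      have h2 : ∀ t, ‖k t * φ (w - t)‖ = k t * ψ (w - t) := by
        intro t
        rcases lt_or_ge t 0 with ht | ht
        · simp [hkneg t ht]
        · rw [norm_mul, Real.norm_of_nonneg (hk0 t), hψ,
            Set.indicator_of_mem (Set.mem_Iic.2 (by linarith))]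
      rw [h1, heq w]
      refine (norm_add_le _ _).trans (add_le_add (Real.norm_of_nonneg (hg0 w)).le ?_)
      refine (norm_integral_le_integral_norm _).trans_eq ?_
      simp_rw [h2]
    · rw [hψ, Set.indicator_of_notMem (by simpa using hw)]
      exact add_nonneg (hg0 w) (integral_nonneg fun t => mul_nonneg (hk0 t) (hψ0 _))
  have hint := integral_mono hψi (hg.add hconv) hle
  rw [integral_add' hg hconv, integral_convolution _ hk hψi, hψ,
    integral_indicator measurableSet_Iic, ContinuousLinearMap.mul_apply'] at hint
  rw [le_div_iff₀ (by linarith)]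
  linarith

/-- Integrating the renewal equation `φ = g + k ⋆ φ`. -/
theorem integral_eq_of_renewal {φ g k : ℝ → ℝ} (hg : Integrable g) (hk : Integrable k)
    (hφ : Integrable φ) (heq : ∀ w, φ w = g w + ∫ t, k t * φ (w - t)) :
    ∫ w, φ w = (∫ w, g w) + (∫ t, k t) * ∫ w, φ w := by
  have hconv := hk.integrable_convolution (ContinuousLinearMap.mul ℝ ℝ) hφ
  have h : φ = g + (k ⋆[ContinuousLinearMap.mul ℝ ℝ, volume] φ) := funext heq
  conv_lhs => rw [h]
  rw [integral_add' hg hconv, integral_convolution _ hk hφ, ContinuousLinearMap.mul_apply']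

end Renewal

/-- The analytic expression of the `k`-th summand of Erlang's formula. -/
noncomputable def erlangBranch (lam D : ℝ) (k : ℕ) (w : ℝ) : ℝ :=
  (-(lam * (w - (k : ℝ) * D))) ^ k * Real.exp (lam * (w - (k : ℝ) * D)) / (Nat.factorial k)

/-- The `k`-th summand of Erlang's formula, switched on at `w = k * D`. -/
noncomputable def erlangTerm (lam D : ℝ) (k : ℕ) : ℝ → ℝ :=
  (Set.Ici ((k : ℝ) * D)).indicator (erlangBranch lam D k)

section Erlang

variable {lam D : ℝ}

theorem continuous_erlangBranch (k : ℕ) : Continuous (erlangBranch lam D k) := by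
  unfold erlangBranch
  fun_prop

theorem erlangTerm_of_le {k : ℕ} {w : ℝ} (h : (k : ℝ) * D ≤ w) :
    erlangTerm lam D k w = erlangBranch lam D k w :=
  Set.indicator_of_mem h _

theorem erlangTerm_of_lt {k : ℕ} {w : ℝ} (h : w < (k : ℝ) * D) : erlangTerm lam D k w = 0 :=
  Set.indicator_of_notMem (by simpa using h) _

theorem hasDerivAt_erlangBranch_zero (w : ℝ) :
    HasDerivAt (erlangBranch lam D 0) (lam * erlangBranch lam D 0 w) w := by
  have h := ((hasDerivAt_id w).const_mul lam).exp
  unfold erlangBranch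
  simp only [id, mul_one] at h
  simpa [mul_comm] using h

theorem mul_erlangBranch_succ_sub (k : ℕ) (w : ℝ) :
    lam * (erlangBranch lam D (k + 1) w - erlangBranch lam D k (w - D)) =
      (-lam) ^ (k + 1) * (w - ((k + 1 : ℕ) : ℝ) * D) ^ k *
        Real.exp (lam * (w - ((k + 1 : ℕ) : ℝ) * D)) *
        (((k + 1 : ℕ) : ℝ) + lam * (w - ((k + 1 : ℕ) : ℝ) * D)) / (Nat.factorial (k + 1)) := by
  have hs : w - D - (k : ℝ) * D = w - ((k + 1 : ℕ) : ℝ) * D := by push_cast; ring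
  have hf : (Nat.factorial k : ℝ) ≠ 0 := by positivity
  have hk : (k : ℝ) + 1 ≠ 0 := by positivity
  rw [erlangBranch, erlangBranch, hs, Nat.factorial_succ]
  generalize w - ((k + 1 : ℕ) : ℝ) * D = u
  rw [← neg_mul, mul_pow, mul_pow]
  push_cast
  field_simp
  ring

theorem hasDerivAt_erlangBranch_succ (k : ℕ) (w : ℝ) :
    HasDerivAt (erlangBranch lam D (k + 1))
      (lam * (erlangBranch lam D (k + 1) w - erlangBranch lam D k (w - D))) w := by
  have h0 : HasDerivAt (fun w : ℝ => lam * (w - ((k + 1 : ℕ) : ℝ) * D)) lam w := by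
    simpa using ((hasDerivAt_id w).sub_const (((k + 1 : ℕ) : ℝ) * D)).const_mul lam
  have h := ((h0.fun_neg.fun_pow (k + 1)).fun_mul h0.exp).div_const (Nat.factorial (k + 1) : ℝ)
  refine h.congr_deriv ?_
  rw [mul_erlangBranch_succ_sub, Nat.add_sub_cancel, ← neg_mul, mul_pow, mul_pow]
  ring

theorem continuousOn_erlangTerm (k : ℕ) :
    ContinuousOn (erlangTerm lam D k) (Set.Ici 0) := by
  cases k with
  | zero =>
    refine (continuous_erlangBranch 0).continuousOn.congr fun w hw => erlangTerm_of_le ?_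
    simpa using hw
  | succ k =>
    refine Continuous.continuousOn ?_
    have h : erlangTerm lam D (k + 1) = fun w =>
        if ((k + 1 : ℕ) : ℝ) * D ≤ w then erlangBranch lam D (k + 1) w else 0 := by
      funext w
      simp only [erlangTerm, Set.indicator, Set.mem_Ici]
    rw [h]
    refine (continuous_erlangBranch _).if_le continuous_const continuous_const continuous_id ?_
    intro w hw
    simp [erlangBranch, ← hw]

theorem hasDerivAt_erlangTerm_zero {w : ℝ} (hw : 0 < w) :
    HasDerivAt (erlangTerm lam D 0) (lam * erlangTerm lam D 0 w) w := by
  rw [erlangTerm_of_le (by simpa using hw.le)]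
  refine (hasDerivAt_erlangBranch_zero w).congr_of_eventuallyEq ?_
  filter_upwards [lt_mem_nhds hw] with x hx
  exact erlangTerm_of_le (by simpa using hx.le)

theorem hasDerivAt_erlangTerm_succ (k : ℕ) {w : ℝ} (hw : w ≠ ((k + 1 : ℕ) : ℝ) * D) :
    HasDerivAt (erlangTerm lam D (k + 1))
      (lam * (erlangTerm lam D (k + 1) w - erlangTerm lam D k (w - D))) w := by
  have hk : ((k + 1 : ℕ) : ℝ) * D = k * D + D := by push_cast; ring
  rcases lt_or_gt_of_ne hw with h | h
  · rw [erlangTerm_of_lt h, erlangTerm_of_lt (by linarith)]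
    refine HasDerivAt.congr_of_eventuallyEq (f := fun _ => (0 : ℝ)) ?_ ?_
    · simpa using hasDerivAt_const w (0 : ℝ)
    · filter_upwards [gt_mem_nhds h] with x hx
      exact erlangTerm_of_lt hx
  · rw [erlangTerm_of_le h.le, erlangTerm_of_le (by linarith)]
    refine (hasDerivAt_erlangBranch_succ k w).congr_of_eventuallyEq ?_
    filter_upwards [lt_mem_nhds h] with x hx
    exact erlangTerm_of_le hx.le

theorem intervalIntegrable_erlangTerm (k : ℕ) (a b : ℝ) :
    IntervalIntegrable (erlangTerm lam D k) volume a b :=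
  ⟨(((continuous_erlangBranch k).intervalIntegrable a b).1).indicator measurableSet_Ici,
    (((continuous_erlangBranch k).intervalIntegrable a b).2).indicator measurableSet_Ici⟩

theorem le_floor_div_iff (hD : 0 < D) {w : ℝ} (hw : 0 ≤ w) (k : ℕ) :
    k ≤ ⌊w / D⌋₊ ↔ (k : ℝ) * D ≤ w := by
  rw [Nat.le_floor_iff (by positivity), le_div_iff₀ hD]

theorem PW_eq_sum (hD : 0 < D) {w : ℝ} {N : ℕ} (hN : w < N * D) :
    PW lam D w = (1 - lam * D) * ∑ k ∈ Finset.range N, erlangTerm lam D k w := by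
  unfold PW
  split_ifs with hw
  · rw [Finset.sum_eq_zero, mul_zero]
    intro k _
    exact erlangTerm_of_lt (hw.trans_le (by positivity))
  · push Not at hw
    congr 1
    trans ∑ k ∈ Finset.range (⌊w / D⌋₊ + 1), erlangTerm lam D k w
    · refine Finset.sum_congr rfl fun k hk => (erlangTerm_of_le ?_).symm
      exact (le_floor_div_iff hD hw k).1 (Nat.lt_succ_iff.1 (Finset.mem_range.1 hk))
    refine Finset.sum_subset ?_ ?_
    · intro k hk
      have := (le_floor_div_iff hD hw k).1 (Nat.lt_succ_iff.1 (Finset.mem_range.1 hk))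
      rw [Finset.mem_range]
      have h : (k : ℝ) < N := lt_of_mul_lt_mul_right (this.trans_lt hN) hD.le
      exact_mod_cast h
    · intro k _ hk
      refine erlangTerm_of_lt (not_le.1 fun h => hk ?_)
      exact Finset.mem_range.2 (Nat.lt_succ_iff.2 ((le_floor_div_iff hD hw k).2 h))

theorem PW_of_neg {w : ℝ} (hw : w < 0) : PW lam D w = 0 := by
  simp [PW, hw]

theorem PW_zero (lam D : ℝ) : PW lam D 0 = 1 - lam * D := by
  simp [PW]

theorem exists_nat_mul_gt (hD : 0 < D) (w : ℝ) : ∃ N : ℕ, w < N * D := by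
  obtain ⟨N, hN⟩ := exists_nat_gt (w / D)
  exact ⟨N, (div_lt_iff₀ hD).1 hN⟩

theorem intervalIntegrable_PW (hD : 0 < D) (a b : ℝ) :
    IntervalIntegrable (PW lam D) volume a b := by
  obtain ⟨N, hN⟩ := exists_nat_mul_gt hD (max a b)
  have h : IntervalIntegrable
      (fun w => (1 - lam * D) * ∑ k ∈ Finset.range N, erlangTerm lam D k w) volume a b := by
    refine IntervalIntegrable.const_mul ?_ _
    have hsum := IntervalIntegrable.sum (Finset.range N)
      fun k _ => intervalIntegrable_erlangTerm (lam := lam) (D := D) k a b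
    exact hsum.congr fun w _ => Finset.sum_apply _ _ _
  refine h.congr fun w hw => (PW_eq_sum hD ?_).symm
  exact hw.2.trans_lt hN

/-- The right-hand side of the delay equation satisfied by `PW`. -/
noncomputable def delayDensity (lam D w : ℝ) : ℝ :=
  lam * (PW lam D w - PW lam D (w - D))

theorem delayDensity_of_neg (hD : 0 < D) {w : ℝ} (hw : w < 0) : delayDensity lam D w = 0 := by
  rw [delayDensity, PW_of_neg hw, PW_of_neg (by linarith), sub_zero, mul_zero]

theorem delayDensity_eq_sum (hD : 0 < D) {w : ℝ} {N : ℕ} (hN : w < (N + 1 : ℕ) * D) :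
    delayDensity lam D w = (1 - lam * D) * (lam * erlangTerm lam D 0 w +
      ∑ k ∈ Finset.range N,
        lam * (erlangTerm lam D (k + 1) w - erlangTerm lam D k (w - D))) := by
  have hN' : w - D < N * D := by push_cast at hN; linarith
  rw [delayDensity, PW_eq_sum hD hN, PW_eq_sum hD hN', Finset.sum_range_succ',
    ← Finset.mul_sum, Finset.sum_sub_distrib]
  ring

theorem intervalIntegrable_delayDensity (hD : 0 < D) (a b : ℝ) :
    IntervalIntegrable (delayDensity lam D) volume a b := by
  have h := (intervalIntegrable_PW (lam := lam) hD (a - D) (b - D)).comp_sub_right D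
  simp only [sub_add_cancel] at h
  exact ((intervalIntegrable_PW hD a b).sub h).const_mul lam

theorem fW_eq_delayDensity (hD : 0 < D) {w : ℝ} (hw : 0 ≤ w) :
    fW lam D w = delayDensity lam D w := by
  have hN : w < (⌊w / D⌋₊ + 1 : ℕ) * D := by
    rw [← div_lt_iff₀ hD]
    exact_mod_cast Nat.lt_floor_add_one (w / D)
  rw [delayDensity_eq_sum hD hN, fW, erlangTerm_of_le (by simpa using hw)]
  congr 2
  · simp [erlangBranch]
  rw [← Finset.Ico_add_one_right_eq_Icc, Finset.sum_Ico_eq_sum_range, Nat.add_sub_cancel]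
  refine Finset.sum_congr rfl fun k hk => ?_
  have hkw := (le_floor_div_iff hD hw (k + 1)).1 (Finset.mem_range.1 hk)
  have hkw' : (k : ℝ) * D ≤ w - D := by push_cast at hkw; linarith
  rw [erlangTerm_of_le hkw, erlangTerm_of_le hkw', mul_erlangBranch_succ_sub, add_comm 1 k,
    Nat.add_sub_cancel]

theorem integral_delayDensity (hD : 0 < D) {x : ℝ} (hx : 0 ≤ x) :
    ∫ w in (0 : ℝ)..x, delayDensity lam D w = PW lam D x - (1 - lam * D) := by
  obtain ⟨N, hN⟩ := exists_nat_mul_gt hD x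
  have hN1 : x < (N + 1 : ℕ) * D := by push_cast; linarith
  rw [← PW_zero lam D]
  refine integral_eq_of_hasDerivAt_off_countable_of_le _ _ hx
    (s := Set.range fun k : ℕ => (k : ℝ) * D) (Set.countable_range _) ?_ ?_
    (intervalIntegrable_delayDensity hD 0 x)
  · refine ContinuousOn.congr (f := fun w => (1 - lam * D) *
      ∑ k ∈ Finset.range N, erlangTerm lam D k w) ?_ fun w hw => PW_eq_sum hD (hw.2.trans_lt hN)
    refine continuousOn_const.mul (continuousOn_finsetSum _ fun k _ => ?_)
    exact (continuousOn_erlangTerm k).mono fun w hw => hw.1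
  · rintro w ⟨⟨hw0, hwx⟩, hws⟩
    have hne : ∀ k : ℕ, w ≠ (k : ℝ) * D := fun k h => hws ⟨k, h.symm⟩
    rw [delayDensity_eq_sum hD (hwx.trans hN1)]
    refine HasDerivAt.congr_of_eventuallyEq (f := fun w => (1 - lam * D) *
      (erlangTerm lam D 0 w + ∑ k ∈ Finset.range N, erlangTerm lam D (k + 1) w)) ?_ ?_
    · refine ((hasDerivAt_erlangTerm_zero hw0).add ?_).const_mul _
      exact HasDerivAt.fun_sum fun k _ => hasDerivAt_erlangTerm_succ k (hne _)
    · filter_upwards [gt_mem_nhds (hwx.trans hN1)] with y hy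
      rw [PW_eq_sum hD hy, Finset.sum_range_succ', add_comm]

theorem integral_delayDensity_of_neg (hD : 0 < D) {x : ℝ} (hx : x < 0) :
    ∫ w in (0 : ℝ)..x, delayDensity lam D w = 0 := by
  rw [intervalIntegral.integral_symm, intervalIntegral.integral_of_le hx.le,
    integral_Ioc_eq_integral_Ioo, setIntegral_congr_fun measurableSet_Ioo
      (g := fun _ => (0 : ℝ)) fun w hw => delayDensity_of_neg hD hw.2]
  simp

/-- The exponentially tilted kernel `t ↦ λ e^{-st}` on `[0, D)`. -/
noncomputable def tiltedKernel (lam D s : ℝ) : ℝ → ℝ :=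
  (Set.Ico 0 D).indicator fun t => lam * Real.exp (-s * t)

theorem integrable_tiltedKernel (lam D s : ℝ) : Integrable (tiltedKernel lam D s) := by
  refine IntegrableOn.integrable_indicator ?_ measurableSet_Ico
  exact (Continuous.integrableOn_Icc (by fun_prop)).mono_set Set.Ico_subset_Icc_self

theorem integral_tiltedKernel (hD : 0 < D) (s : ℝ) :
    ∫ t, tiltedKernel lam D s t = lam * ∫ t in (0 : ℝ)..D, Real.exp (-s * t) := by
  rw [tiltedKernel, integral_indicator measurableSet_Ico, integral_const_mul,
    intervalIntegral.integral_of_le hD.le, integral_Ico_eq_integral_Ioo,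
    integral_Ioc_eq_integral_Ioo]

/-- The renewal equation of the exponentially tilted density. -/
theorem delayDensity_renewal (hD : 0 < D) (s w : ℝ) :
    Real.exp (-s * w) * delayDensity lam D w = (1 - lam * D) * tiltedKernel lam D s w +
      ∫ t, tiltedKernel lam D s t * (Real.exp (-s * (w - t)) * delayDensity lam D (w - t)) := by
  have hconv : ∫ t, tiltedKernel lam D s t *
      (Real.exp (-s * (w - t)) * delayDensity lam D (w - t)) =
      lam * Real.exp (-s * w) * ((∫ u in (0 : ℝ)..w, delayDensity lam D u) -
        ∫ u in (0 : ℝ)..(w - D), delayDensity lam D u) := by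
    have h : ∀ t, tiltedKernel lam D s t *
        (Real.exp (-s * (w - t)) * delayDensity lam D (w - t)) =
        (Set.Ico 0 D).indicator
          (fun t => lam * Real.exp (-s * w) * delayDensity lam D (w - t)) t := by
      intro t
      by_cases ht : t ∈ Set.Ico 0 D
      · rw [tiltedKernel, Set.indicator_of_mem ht, Set.indicator_of_mem ht,
          show -s * w = -s * t + -s * (w - t) by ring, Real.exp_add]
        ring
      · rw [tiltedKernel, Set.indicator_of_notMem ht, Set.indicator_of_notMem ht, zero_mul]
    simp_rw [h]
    rw [integral_indicator measurableSet_Ico, integral_const_mul, integral_Ico_eq_integral_Ioo,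
      ← integral_Ioc_eq_integral_Ioo, ← intervalIntegral.integral_of_le hD.le,
      intervalIntegral.integral_comp_sub_left (delayDensity lam D) w, sub_zero,
      intervalIntegral.integral_interval_sub_left (intervalIntegrable_delayDensity hD _ _)
        (intervalIntegrable_delayDensity hD _ _)]
  rw [hconv]
  rcases lt_or_ge w 0 with hw | hw
  · rw [integral_delayDensity_of_neg hD hw, integral_delayDensity_of_neg hD (by linarith),
      delayDensity_of_neg hD hw, tiltedKernel,
      Set.indicator_of_notMem (fun h => absurd h.1 (not_le.2 hw))]
    simp
  · rw [integral_delayDensity hD hw]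
    rcases lt_or_ge w D with hwD | hwD
    · rw [integral_delayDensity_of_neg hD (by linarith), delayDensity,
        PW_of_neg (w := w - D) (by linarith), tiltedKernel, Set.indicator_of_mem (Set.mem_Ico.2 ⟨hw, hwD⟩)]
      ring
    · rw [integral_delayDensity hD (by linarith), delayDensity, tiltedKernel,
        Set.indicator_of_notMem (fun h => absurd h.2 (not_lt.2 hwD))]
      ring

theorem integrableOn_Iic_tilted_delayDensity (hD : 0 < D) (s T : ℝ) :
    IntegrableOn (fun w => Real.exp (-s * w) * delayDensity lam D w) (Set.Iic T) := by
  have h : IntegrableOn (fun w => Real.exp (-s * w) * delayDensity lam D w) (Set.Icc 0 T) := by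
    rcases lt_or_ge T 0 with hT | hT
    · simp [Set.Icc_eq_empty (not_le.2 hT)]
    · refine IntegrableOn.continuousOn_mul (by fun_prop) ?_ isCompact_Icc
      exact (intervalIntegrable_iff_integrableOn_Icc_of_le hT).1
        (intervalIntegrable_delayDensity hD 0 T)
  refine h.of_forall_sdiff_eq_zero measurableSet_Iic fun w hw => ?_
  have hw0 : w < 0 := by
    by_contra h0
    exact hw.2 ⟨not_lt.1 h0, hw.1⟩
  rw [delayDensity_of_neg hD hw0, mul_zero]

/-- The Laplace transform of the continuous part of the waiting-time density, together with its
convergence. -/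
theorem laplace_fW (hlam : 0 < lam) (hD : 0 < D) (hstab : lam * D < 1) {s : ℝ}
    (hs : lam * ∫ t in (0 : ℝ)..D, Real.exp (-s * t) < 1) :
    IntegrableOn (fun w => Real.exp (-s * w) * fW lam D w) (Set.Ioi 0) ∧
    ∫ w in Set.Ioi (0 : ℝ), Real.exp (-s * w) * fW lam D w =
      (1 - lam * D) * (lam * ∫ t in (0 : ℝ)..D, Real.exp (-s * t)) /
        (1 - lam * ∫ t in (0 : ℝ)..D, Real.exp (-s * t)) := by
  have hk := integrable_tiltedKernel lam D s
  have hk0 : ∀ t, 0 ≤ tiltedKernel lam D s t := fun t =>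
    Set.indicator_nonneg (fun _ _ => by positivity) t
  have hkneg : ∀ t < 0, tiltedKernel lam D s t = 0 := fun t ht =>
    Set.indicator_of_notMem (fun h => absurd h.1 (not_le.2 ht)) _
  have hφ := integrable_of_renewal (hk.const_mul (1 - lam * D)) hk
    (fun w => mul_nonneg (by linarith) (hk0 w)) hk0 hkneg
    (by rwa [integral_tiltedKernel hD])
    (integrableOn_Iic_tilted_delayDensity hD s) (delayDensity_renewal hD s)
  have hint := integral_eq_of_renewal (hk.const_mul (1 - lam * D)) hk hφ
    (delayDensity_renewal hD s)
  rw [integral_const_mul, integral_tiltedKernel hD] at hint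
  have hcongr : Set.EqOn (fun w => Real.exp (-s * w) * fW lam D w)
      (fun w => Real.exp (-s * w) * delayDensity lam D w) (Set.Ioi 0) := fun w hw => by
    simp only [fW_eq_delayDensity hD (le_of_lt hw)]
  have hIoi : ∫ w in Set.Ioi (0 : ℝ), Real.exp (-s * w) * fW lam D w =
      ∫ w, Real.exp (-s * w) * delayDensity lam D w := by
    rw [setIntegral_congr_fun measurableSet_Ioi hcongr, ← integral_Ici_eq_integral_Ioi]
    refine setIntegral_eq_integral_of_forall_compl_eq_zero fun w hw => ?_
    rw [delayDensity_of_neg hD (by simpa using hw), mul_zero]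
  refine ⟨hφ.integrableOn.congr_fun hcongr.symm measurableSet_Ioi, ?_⟩
  rw [hIoi, eq_div_iff (by linarith)]
  linarith

end Erlang

/-- probability `p(A)` that a packet of the M/M/1 – M/D/1 tandem is
queued at both systems. -/
theorem md1_tandem_pA (lam D μ₁ α₁ : ℝ) (hlam : 0 < lam) (hμ₁ : lam < μ₁)
    (hD : 0 < D) (hstab : lam * D < 1) (hα₁ : α₁ = μ₁ - lam) :
    lam / μ₁ * ((1 - lam * D) * (1 - Real.exp (-μ₁ * D)) +
        ∫ w in Set.Ioi (0:ℝ), (1 - Real.exp (-μ₁ * (w + D))) * fW lam D w) =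
      lam / μ₁ * (1 - (1 - lam * D) * Real.exp (-μ₁ * D) *
        (1 + lam * (Real.exp (μ₁ * D) - 1) / (α₁ * Real.exp (μ₁ * D) + lam))) := by
  have h0 : ∫ t in (0 : ℝ)..D, Real.exp (-0 * t) = D := by simp
  have hμ : 0 < μ₁ := hlam.trans hμ₁
  have hE : ∫ t in (0 : ℝ)..D, Real.exp (-μ₁ * t) = (1 - Real.exp (-μ₁ * D)) / μ₁ := by
    rw [intervalIntegral.integral_comp_mul_left (fun x => Real.exp x) (neg_ne_zero.2 hμ.ne'),
      integral_exp, mul_zero, Real.exp_zero, smul_eq_mul]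
    field_simp
    ring
  have hE0 : 0 < Real.exp (-μ₁ * D) := Real.exp_pos _
  have hlt : lam * ((1 - Real.exp (-μ₁ * D)) / μ₁) < 1 := by
    rw [← mul_div_assoc, div_lt_one hμ]
    nlinarith
  obtain ⟨hi0, hv0⟩ := laplace_fW hlam hD hstab (s := 0) (by rwa [h0])
  obtain ⟨hi1, hv1⟩ := laplace_fW hlam hD hstab (s := μ₁) (by rwa [hE])
  rw [h0] at hv0
  rw [hE] at hv1
  have hsplit : ∀ w, (1 - Real.exp (-μ₁ * (w + D))) * fW lam D w =
      Real.exp (-0 * w) * fW lam D w -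
        Real.exp (-μ₁ * D) * (Real.exp (-μ₁ * w) * fW lam D w) := by
    intro w
    rw [mul_add, Real.exp_add]
    simp only [neg_zero, zero_mul, Real.exp_zero]
    ring
  simp_rw [hsplit]
  rw [integral_sub hi0 (hi1.const_mul _), integral_const_mul, hv0, hv1, hα₁]
  have hinv : Real.exp (μ₁ * D) = (Real.exp (-μ₁ * D))⁻¹ := by
    rw [← Real.exp_neg]
    ring_nf
  rw [hinv]
  have hden : μ₁ - lam * (1 - Real.exp (-μ₁ * D)) ≠ 0 := by nlinarith
  generalize Real.exp (-μ₁ * D) = e at *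
  have hstab' : 1 - lam * D ≠ 0 := by linarith
  have hden1 : 1 - lam * ((1 - e) / μ₁) ≠ 0 := by linarith
  have hden2 : (μ₁ - lam) * e⁻¹ + lam ≠ 0 := by
    have : 0 < e⁻¹ := by positivity
    nlinarith [mul_pos (sub_pos.2 hμ₁) this]
  have e1 : (1 - lam * D) * (lam * ((1 - e) / μ₁)) / (1 - lam * ((1 - e) / μ₁)) =
      (1 - lam * D) * (lam * (1 - e)) / (μ₁ - lam * (1 - e)) := by
    rw [div_eq_div_iff hden1 hden]
    field_simp
  have e2 : lam * (e⁻¹ - 1) / ((μ₁ - lam) * e⁻¹ + lam) =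
      lam * (1 - e) / (μ₁ - lam * (1 - e)) := by
    rw [div_eq_div_iff hden2 hden]
    field_simp
    ring
  rw [e1, e2, mul_div_cancel_left₀ _ hstab']
  ring
end
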